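/- For every real ℓ > 0 and every θ > 0, there exists a strictly increasing sequence of primes (p_k) and a constant c > 0 such that ∑_k 1/p_k = ℓ and p_k ≥ c·θ^k for all k. -/

import Mathlib

open Filter Topology

open MeasureTheory Set

/-!
Expand `ℓ` greedily: `p k` is the least prime above `p (k - 1)` and above `1 / r`, where `r` is what
remains of `ℓ`. Since `∑ 1 / p` diverges over the primes, the constraint `1 / r` is active at some
late step, and it then stays active because consecutive primes have ratio tending to `1`. At such a
step `p k ≤ (1 + ε) / r`, so the remainder gets multiplied by at most `ε`; as `ε` is arbitrary,
the remainder tends to `0`, and `p k > 1 / r` outgrows every geometric sequence.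

That consecutive primes have ratio tending to `1` is a Wiener–Ikehara argument. If a Dirichlet
series `∑ a n / n ^ s` with `a n ≥ 0` is `A / (s - 1)` plus a function continuous on `1 ≤ re s`,
integrating it against a twisted tent function on the line `re s = 1` gives
`∑ a n / n * fejer l (x - log n) → A * ∫ fejer l` as `x → ∞`, for every bandwidth `l`. A large `l`
concentrates the kernel, which forces the support of `a` to meet every neighbourhood of `x` of fixed
length in the logarithmic scale. For the primes, `a` is the von Mangoldt function, and prime powers
contribute a negligible amount.
-/

/-! ### The Fejér kernel -/

/-- The Fejér kernel `2 (1 - cos (l v)) / (l v ^ 2)` of bandwidth `l`, written with `sinc` so that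
the value `l` at `v = 0` needs no separate case. -/
noncomputable def fejer (l v : ℝ) : ℝ := l * Real.sinc (l * v / 2) ^ 2

section Fejer

variable {l : ℝ}

lemma fejer_nonneg (hl : 0 ≤ l) (v : ℝ) : 0 ≤ fejer l v := mul_nonneg hl (sq_nonneg _)

lemma fejer_zero_right (l : ℝ) : fejer l 0 = l := by simp [fejer]

lemma fejer_le (hl : 0 ≤ l) (v : ℝ) : fejer l v ≤ l :=
  mul_le_of_le_one_right hl ((sq_le_one_iff_abs_le_one _).2 (Real.abs_sinc_le_one _))

lemma continuous_fejer (l : ℝ) : Continuous (fejer l) := by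
  have := Real.continuous_sinc
  unfold fejer
  fun_prop

lemma fejer_eq_mul_fejer_one (l v : ℝ) : fejer l v = l * fejer 1 (l * v) := by simp [fejer]

lemma fejer_mul_sq (hl : l ≠ 0) (v : ℝ) : fejer l v * v ^ 2 = 2 * (1 - Real.cos (l * v)) / l := by
  rcases eq_or_ne v 0 with rfl | hv
  · simp
  have hcos : Real.cos (l * v) = 1 - 2 * Real.sin (l * v / 2) ^ 2 := by
    rw [Real.sin_sq_eq_half_sub]; ring_nf
  rw [fejer, Real.sinc_of_ne_zero (by positivity), hcos]
  field_simp
  ring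

lemma fejer_mul_sq_le (hl : 0 < l) (v : ℝ) : fejer l v * v ^ 2 ≤ 4 / l := by
  rw [fejer_mul_sq hl.ne']
  gcongr
  linarith [Real.neg_one_le_cos (l * v)]

lemma fejer_le_mul_inv_one_add_sq (hl : 0 < l) (v : ℝ) :
    fejer l v ≤ (l + 4 / l) * (1 + v ^ 2)⁻¹ := by
  rw [le_mul_inv_iff₀ (by positivity)]
  linarith [fejer_le hl.le v, fejer_mul_sq_le hl v]

lemma integrable_fejer (hl : 0 < l) : Integrable (fejer l) := by
  refine (integrable_inv_one_add_sq.const_mul (l + 4 / l)).mono'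
    (continuous_fejer l).aestronglyMeasurable (.of_forall fun v => ?_)
  rw [Real.norm_of_nonneg (fejer_nonneg hl.le v)]
  exact fejer_le_mul_inv_one_add_sq hl v

lemma integral_fejer_eq_integral_fejer_one (hl : 0 < l) : ∫ v, fejer l v = ∫ v, fejer 1 v := by
  simp_rw [fejer_eq_mul_fejer_one l, integral_const_mul, Measure.integral_comp_mul_left,
    abs_of_pos (inv_pos.2 hl), smul_eq_mul, mul_inv_cancel_left₀ hl.ne']

lemma integral_fejer_pos (hl : 0 < l) : 0 < ∫ v, fejer l v :=
  integral_pos_of_integrable_nonneg_nonzero (x := 0) (continuous_fejer l) (integrable_fejer hl)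
    (fejer_nonneg hl.le) (by simp [fejer_zero_right, hl.ne'])

lemma tendsto_fejer_atTop (hl : 0 < l) : Tendsto (fejer l) atTop (𝓝 0) := by
  have hsq : Tendsto (fun v : ℝ => 1 + v ^ 2) atTop atTop :=
    tendsto_atTop_add_const_left _ _ (tendsto_pow_atTop two_ne_zero)
  refine squeeze_zero (fejer_nonneg hl.le) (fejer_le_mul_inv_one_add_sq hl) ?_
  simpa using hsq.inv_tendsto_atTop.const_mul (l + 4 / l)

lemma two_mul_one_sub_cos_le_fejer_one_mul (v : ℝ) :
    2 * (1 - Real.cos v) ≤ fejer 1 v * (1 + v ^ 2) := by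
  have := fejer_mul_sq one_ne_zero v
  rw [one_mul, div_one] at this
  linarith [fejer_nonneg zero_le_one v]

-- The zeros of the two summands on the right interlace, because `cos v + cos (v + π) = 0`.
lemma four_mul_inv_one_add_sq_le (v : ℝ) :
    4 * (1 + v ^ 2)⁻¹ ≤ (1 + 2 * Real.pi ^ 2) * (fejer 1 v + fejer 1 (v + Real.pi)) := by
  rw [← div_eq_mul_inv, div_le_iff₀ (by positivity)]
  have hv := two_mul_one_sub_cos_le_fejer_one_mul v
  have hvπ := two_mul_one_sub_cos_le_fejer_one_mul (v + Real.pi)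
  rw [Real.cos_add_pi] at hvπ
  have hK : 1 + v ^ 2 ≤ (1 + 2 * Real.pi ^ 2) * (1 + v ^ 2) :=
    le_mul_of_one_le_left (by positivity) (by linarith [sq_nonneg Real.pi])
  have hKπ : 1 + (v + Real.pi) ^ 2 ≤ (1 + 2 * Real.pi ^ 2) * (1 + v ^ 2) := by
    nlinarith [sq_nonneg (v - Real.pi), Real.pi_gt_three, sq_nonneg (v * Real.pi),
      mul_nonneg (sq_nonneg v) (show 0 ≤ Real.pi ^ 2 - 1 by nlinarith [Real.pi_gt_three])]
  calc (4 : ℝ) = 2 * (1 - Real.cos v) + 2 * (1 - -Real.cos v) := by ring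
    _ ≤ fejer 1 v * (1 + v ^ 2) + fejer 1 (v + Real.pi) * (1 + (v + Real.pi) ^ 2) := by gcongr
    _ ≤ fejer 1 v * ((1 + 2 * Real.pi ^ 2) * (1 + v ^ 2)) +
        fejer 1 (v + Real.pi) * ((1 + 2 * Real.pi ^ 2) * (1 + v ^ 2)) := by
      have h₁ := fejer_nonneg zero_le_one v
      have h₂ := fejer_nonneg zero_le_one (v + Real.pi)
      gcongr
    _ = _ := by ring

lemma exists_fejer_le_div_mul {d : ℝ} (hd : 0 < d) :
    ∃ C : ℝ, ∀ l v : ℝ, 0 < l → d < |v| →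
      fejer l v ≤ C / l * (fejer 1 v + fejer 1 (v + Real.pi)) := by
  refine ⟨(1 + (d ^ 2)⁻¹) * (1 + 2 * Real.pi ^ 2), fun l v hl hv => ?_⟩
  have hv₀ : 0 < v ^ 2 := by rw [← sq_abs]; have := hd.trans hv; positivity
  have hdv : 1 ≤ (d ^ 2)⁻¹ * v ^ 2 := by
    rw [← div_eq_inv_mul, one_le_div (by positivity), ← sq_abs v]
    gcongr
  calc fejer l v ≤ 4 / l / v ^ 2 := (le_div_iff₀ hv₀).2 (fejer_mul_sq_le hl v)
    _ ≤ (1 + (d ^ 2)⁻¹) / l * (4 * (1 + v ^ 2)⁻¹) := by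
      have hle : 1 + v ^ 2 ≤ (1 + (d ^ 2)⁻¹) * v ^ 2 := by linarith
      rw [div_div, div_mul_eq_mul_div, ← div_eq_mul_inv, mul_div_assoc', div_div,
        div_le_div_iff₀ (by positivity) (by positivity)]
      linarith [mul_le_mul_of_nonneg_left hle hl.le]
    _ ≤ (1 + (d ^ 2)⁻¹) / l *
        ((1 + 2 * Real.pi ^ 2) * (fejer 1 v + fejer 1 (v + Real.pi))) :=
      mul_le_mul_of_nonneg_left (four_mul_inv_one_add_sq_le v) (by positivity)
    _ = _ := by ring

end Fejer

/-- The tent function `1 - |t| / l` on `[-l, l]`, twisted by the character `t ↦ exp (i t x)`. -/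
noncomputable def twistedTent (l x t : ℝ) : ℂ :=
  ((1 - |t| / l : ℝ) : ℂ) * Complex.exp (t * x * Complex.I)

section TwistedTent

variable {l : ℝ}

lemma continuous_twistedTent (l x : ℝ) : Continuous (twistedTent l x) := by
  unfold twistedTent; fun_prop

lemma norm_twistedTent_le_one {t : ℝ} (hl : 0 < l) (x : ℝ) (ht : |t| ≤ l) :
    ‖twistedTent l x t‖ ≤ 1 := by
  rw [twistedTent, norm_mul, ← Complex.ofReal_mul, Complex.norm_exp_ofReal_mul_I, mul_one,
    Complex.norm_real, Real.norm_of_nonneg (sub_nonneg.2 ((div_le_one hl).2 ht))]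
  have : 0 ≤ |t| / l := by positivity
  linarith

lemma twistedTent_mul_exp (l x u t : ℝ) :
    twistedTent l x t * Complex.exp (-(t * u) * Complex.I) = twistedTent l (x - u) t := by
  rw [twistedTent, twistedTent, mul_assoc, ← Complex.exp_add]
  push_cast
  ring_nf

lemma integral_tent_mul_cos (hl : 0 < l) (x : ℝ) :
    ∫ t in 0..l, 2 * (1 - t / l) * Real.cos (t * x) = fejer l x := by
  rcases eq_or_ne x 0 with rfl | hx
  · simp only [mul_zero, Real.cos_zero, mul_one, fejer_zero_right]
    rw [intervalIntegral.integral_const_mul, intervalIntegral.integral_sub (by simp)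
      (Continuous.intervalIntegrable (by fun_prop) _ _), intervalIntegral.integral_div]
    simp only [intervalIntegral.integral_const, integral_id]
    simp only [smul_eq_mul]
    field_simp
    ring
  have hderiv : ∀ t ∈ uIcc 0 l, HasDerivAt
      (fun t => 2 * ((1 - t / l) * (Real.sin (t * x) / x) - Real.cos (t * x) / (l * x ^ 2)))
      (2 * (1 - t / l) * Real.cos (t * x)) t := by
    intro t _
    have hlin : HasDerivAt (fun t => t * x) x t := hasDerivAt_mul_const x
    have htent : HasDerivAt (fun t => 1 - t / l) (-(1 / l)) t :=
      ((hasDerivAt_id t).div_const l).const_sub 1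
    refine (((htent.mul (hlin.sin.div_const x)).sub
      (hlin.cos.div_const (l * x ^ 2))).const_mul 2).congr_deriv ?_
    field_simp
    ring
  rw [intervalIntegral.integral_eq_sub_of_hasDerivAt hderiv
    (Continuous.intervalIntegrable (by fun_prop) _ _), eq_div_of_mul_eq (by positivity)
      (fejer_mul_sq hl.ne' x)]
  simp only [div_self hl.ne', sub_self, zero_mul, zero_sub, zero_div, sub_zero, Real.sin_zero,
    mul_zero, Real.cos_zero]
  field_simp
  ring

lemma integral_twistedTent (hl : 0 < l) (x : ℝ) :
    ∫ t in (-l)..l, twistedTent l x t = fejer l x := by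
  have hint (x a b : ℝ) : IntervalIntegrable (twistedTent l x) volume a b :=
    (continuous_twistedTent l x).intervalIntegrable a b
  have hneg (t : ℝ) : twistedTent l x (-t) = twistedTent l (-x) t := by simp [twistedTent]
  have hreflect : ∫ t in (-l)..0, twistedTent l x t = ∫ t in 0..l, twistedTent l (-x) t := by
    simpa [hneg] using (intervalIntegral.integral_comp_neg (a := 0) (b := l) (twistedTent l x)).symm
  rw [← intervalIntegral.integral_add_adjacent_intervals (hint x (-l) 0) (hint x 0 l), hreflect,
    ← intervalIntegral.integral_add (hint _ _ _) (hint _ _ _), ← integral_tent_mul_cos hl x,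
    ← intervalIntegral.integral_ofReal]
  refine intervalIntegral.integral_congr fun t ht => ?_
  rw [uIcc_of_le hl.le] at ht
  simp only [twistedTent, abs_of_nonneg ht.1]
  push_cast
  rw [Complex.cos]
  ring_nf

end TwistedTent

/-! ### Smoothed Dirichlet series -/

section DirichletSeries

variable {l : ℝ}

lemma term_add_mul_I (f : ℕ → ℂ) (s : ℂ) (t : ℝ) (n : ℕ) :
    LSeries.term f (s + t * Complex.I) n =
      LSeries.term f s n * Complex.exp (-(t * Real.log n) * Complex.I) := by
  rcases eq_or_ne n 0 with rfl | hn
  · simp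
  have hn' : (n : ℂ) ≠ 0 := Nat.cast_ne_zero.2 hn
  rw [LSeries.term_of_ne_zero hn, LSeries.term_of_ne_zero hn, div_eq_mul_inv, div_eq_mul_inv,
    ← Complex.cpow_neg, ← Complex.cpow_neg, neg_add, Complex.cpow_add _ _ hn', mul_assoc,
    Complex.cpow_def_of_ne_zero hn' (-(t * Complex.I)), ← Complex.natCast_log]
  ring_nf

lemma hasSum_term_mul_fejer {f : ℕ → ℂ} {s : ℂ} (hf : LSeriesSummable f s) (hl : 0 < l) (x : ℝ) :
    HasSum (fun n => LSeries.term f s n * fejer l (x - Real.log n))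
      (∫ t in (-l)..l, twistedTent l x t * LSeries f (s + t * Complex.I)) := by
  have hterm (n : ℕ) : LSeries.term f s n * fejer l (x - Real.log n) =
      ∫ t in (-l)..l, twistedTent l x t * LSeries.term f (s + t * Complex.I) n := by
    rw [← integral_twistedTent hl, ← intervalIntegral.integral_const_mul]
    simp_rw [term_add_mul_I, ← twistedTent_mul_exp, mul_left_comm]
  simp_rw [hterm]
  refine intervalIntegral.hasSum_integral_of_dominated_convergence
    (fun n _ => ‖LSeries.term f s n‖) (fun n => ?_) (fun n => .of_forall fun t ht => ?_)
    (.of_forall fun _ _ => hf.norm) (by simp) (.of_forall fun t _ => ?_)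
  · have := continuous_twistedTent l x
    simp_rw [term_add_mul_I]
    exact Continuous.aestronglyMeasurable (by fun_prop)
  · rw [uIoc_of_le (by linarith)] at ht
    have hnorm : ‖LSeries.term f (s + t * Complex.I) n‖ = ‖LSeries.term f s n‖ := by
      simp [LSeries.norm_term_eq]
    rw [norm_mul, hnorm]
    exact mul_le_of_le_one_left (norm_nonneg _)
      (norm_twistedTent_le_one hl x (abs_le.2 ⟨ht.1.le, ht.2⟩))
  · refine (LSeriesSummable.LSeriesHasSum ?_).mul_left _
    exact (LSeriesSummable_iff_of_re_eq_re (by simp)).1 hf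

lemma integral_twistedTent_div {s : ℂ} (hs : 0 < s.re) (hl : 0 < l) (x : ℝ) :
    ∫ t in (-l)..l, twistedTent l x t / (s + t * Complex.I) =
      ∫ u in Ioi (0 : ℝ), Complex.exp (-s * u) * fejer l (x - u) := by
  have hlaplace (t : ℝ) : (s + t * Complex.I)⁻¹ =
      ∫ u in Ioi (0 : ℝ), Complex.exp (-(s + t * Complex.I) * u) := by
    rw [integral_exp_mul_complex_Ioi (by simpa using hs)]
    rw [Complex.ofReal_zero, mul_zero, Complex.exp_zero, neg_div_neg_eq, one_div]
  have hfejer (u : ℝ) : Complex.exp (-s * u) * fejer l (x - u) = ∫ t in Ioc (-l) l,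
      twistedTent l x t * Complex.exp (-(s + t * Complex.I) * u) := by
    rw [← integral_twistedTent hl, intervalIntegral.integral_of_le (by linarith),
      ← integral_const_mul]
    refine integral_congr_ae (.of_forall fun t => ?_)
    dsimp only
    rw [← twistedTent_mul_exp, mul_left_comm, ← Complex.exp_add]
    ring_nf
  simp_rw [div_eq_mul_inv, hlaplace, hfejer, ← integral_const_mul]
  rw [intervalIntegral.integral_of_le (by linarith), integral_integral_swap]
  have htent : IntegrableOn (fun t => ‖twistedTent l x t‖) (Ioc (-l) l) :=
    (continuous_twistedTent l x).norm.integrableOn_Ioc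
  have hexp : IntegrableOn (fun u : ℝ => Real.exp (-s.re * u)) (Ioi 0) :=
    integrableOn_exp_mul_Ioi (by linarith) 0
  refine (htent.mul_prod hexp).mono' ?_ (.of_forall fun p => ?_)
  · have := continuous_twistedTent l x
    unfold Function.uncurry
    exact Continuous.aestronglyMeasurable (by fun_prop)
  · simp [Function.uncurry, Complex.norm_exp]

lemma tendsto_integral_exp_mul_fejer (hl : 0 < l) (x : ℝ) :
    Tendsto (fun δ : ℝ => ∫ u in Ioi (0 : ℝ), Real.exp (-δ * u) * fejer l (x - u)) (𝓝[>] 0)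
      (𝓝 (∫ u in Ioi (0 : ℝ), fejer l (x - u))) := by
  have hcont := continuous_fejer l
  refine tendsto_integral_filter_of_dominated_convergence (fun u => fejer l (x - u))
    (.of_forall fun δ => Continuous.aestronglyMeasurable (by fun_prop)) ?_
    ((integrable_fejer hl).comp_sub_left x).integrableOn (.of_forall fun u => ?_)
  · filter_upwards [self_mem_nhdsWithin] with δ (hδ : 0 < δ)
    filter_upwards [ae_restrict_mem measurableSet_Ioi] with u (hu : 0 < u)
    have hnonneg := fejer_nonneg hl.le (x - u)
    rw [Real.norm_of_nonneg (by positivity)]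
    exact mul_le_of_le_one_left hnonneg (Real.exp_le_one_iff.2 (by nlinarith))
  · refine tendsto_nhdsWithin_of_tendsto_nhds (Continuous.tendsto' (by fun_prop) _ _ (by simp))

lemma tendsto_integral_Ioi_fejer (hl : 0 < l) :
    Tendsto (fun x => ∫ u in Ioi (0 : ℝ), fejer l (x - u)) atTop (𝓝 (∫ v, fejer l v)) := by
  have hreflect (x : ℝ) : ∫ u in Ioi (0 : ℝ), fejer l (x - u) = ∫ v in Iio x, fejer l v := by
    simp_rw [← integral_indicator measurableSet_Ioi, ← integral_indicator measurableSet_Iio]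
    rw [← integral_sub_left_eq_self _ volume x]
    congr with u
    simp [indicator]
  simp_rw [hreflect]
  exact (aecover_Iio tendsto_id).integral_tendsto_of_countably_generated (integrable_fejer hl)

lemma tendsto_integral_twistedTent_mul_atTop (hl : 0 < l) (g : ℝ → ℂ) :
    Tendsto (fun x => ∫ t in (-l)..l, twistedTent l x t * g t) atTop (𝓝 0) := by
  have hatTop : Tendsto (fun x : ℝ => -(x / (2 * Real.pi))) atTop (cocompact ℝ) :=
    (tendsto_neg_atTop_atBot.comp (tendsto_id.atTop_div_const (by positivity))).mono_right
      atBot_le_cocompact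
  refine ((Real.tendsto_integral_exp_smul_cocompact
    ((Ioc (-l) l).indicator fun t => ((1 - |t| / l : ℝ) : ℂ) * g t)).comp hatTop).congr fun x => ?_
  rw [intervalIntegral.integral_of_le (by linarith), ← integral_indicator measurableSet_Ioc]
  refine integral_congr_ae (.of_forall fun t => ?_)
  have hphase : 2 * Real.pi * -(t * -(x / (2 * Real.pi))) = t * x := by field_simp
  by_cases ht : t ∈ Ioc (-l) l
  · simp only [indicator_of_mem ht, Circle.smul_def, Real.fourierChar_apply, smul_eq_mul, hphase,
      twistedTent, Complex.ofReal_mul]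
    ring
  · simp [indicator_of_notMem ht]

lemma tendsto_integral_twistedTent_mul_nhdsGT {G : ℂ → ℂ} {σ₀ : ℝ}
    (hG : ContinuousOn G {s | σ₀ ≤ s.re}) (l x : ℝ) :
    Tendsto (fun σ : ℝ => ∫ t in (-l)..l, twistedTent l x t * G (σ + t * Complex.I)) (𝓝[>] σ₀)
      (𝓝 (∫ t in (-l)..l, twistedTent l x t * G (σ₀ + t * Complex.I))) := by
  have hGmax : Continuous fun p : ℝ × ℝ => G ((max p.1 σ₀ : ℝ) + p.2 * Complex.I) :=
    hG.comp_continuous (by fun_prop) fun p => by simp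
  have hcont : Continuous fun σ : ℝ =>
      ∫ t in (-l)..l, twistedTent l x t * G ((max σ σ₀ : ℝ) + t * Complex.I) :=
    intervalIntegral.continuous_parametric_intervalIntegral_of_continuous'
      (((continuous_twistedTent l x).comp continuous_snd).mul hGmax) _ _
  refine (tendsto_nhdsWithin_of_tendsto_nhds (hcont.tendsto' σ₀ _ (by simp))).congr' ?_
  filter_upwards [self_mem_nhdsWithin] with σ (hσ : σ₀ < σ)
  rw [max_eq_left hσ.le]

end DirichletSeries

lemma hasSum_of_tendsto_of_le {ι α : Type*} {𝓕 : Filter ι} [𝓕.NeBot] {F : ι → α → ℝ}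
    {f : α → ℝ} {R : ι → ℝ} {r : ℝ} (hF : ∀ᶠ i in 𝓕, ∀ n, 0 ≤ F i n ∧ F i n ≤ f n)
    (hlim : ∀ n, Tendsto (fun i => F i n) 𝓕 (𝓝 (f n))) (hsum : ∀ᶠ i in 𝓕, HasSum (F i) (R i))
    (hR : Tendsto R 𝓕 (𝓝 r)) : HasSum f r := by
  have hnonneg (n : α) : 0 ≤ f n :=
    ge_of_tendsto (hlim n) (hF.mono fun i hi => (hi n).1)
  have hf : Summable f := by
    refine summable_of_sum_le (c := r) hnonneg fun u => ?_
    refine le_of_tendsto_of_tendsto (tendsto_finsetSum u fun n _ => hlim n) hR ?_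
    filter_upwards [hF, hsum] with i hi hsi
    exact sum_le_hasSum u (fun n _ => (hi n).1) hsi
  have hdom : Tendsto (fun i => ∑' n, F i n) 𝓕 (𝓝 (∑' n, f n)) := by
    refine tendsto_tsum_of_dominated_convergence hf hlim (hF.mono fun i hi n => ?_)
    rw [Real.norm_of_nonneg (hi n).1]
    exact (hi n).2
  have hR' : Tendsto R 𝓕 (𝓝 (∑' n, f n)) := hdom.congr' (hsum.mono fun i hi => hi.tsum_eq)
  exact tendsto_nhds_unique hR' hR ▸ hf.hasSum

lemma div_natCast_rpow_le_div {b σ : ℝ} (hb : 0 ≤ b) (hσ : 1 ≤ σ) (n : ℕ) :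
    b / n ^ σ ≤ b / n := by
  rcases eq_or_ne n 0 with rfl | hn
  · simp [(zero_lt_one.trans_le hσ).ne']
  have hn₁ : (1 : ℝ) ≤ n := by exact_mod_cast Nat.one_le_iff_ne_zero.2 hn
  gcongr
  exact Real.self_le_rpow_of_one_le hn₁ hσ

lemma tendsto_div_natCast_rpow_nhds_one (b : ℝ) (n : ℕ) :
    Tendsto (fun σ : ℝ => b / n ^ σ) (𝓝 1) (𝓝 (b / n)) := by
  simp_rw [div_eq_mul_inv, ← Real.rpow_neg n.cast_nonneg, ← Real.rpow_neg_one]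
  exact ((Real.continuousAt_const_rpow' (by norm_num)).tendsto.comp
    (continuous_neg.tendsto 1)).const_mul b

section WienerIkehara

variable {a : ℕ → ℝ} {A : ℝ} {G : ℂ → ℂ}

lemma hasSum_div_rpow_mul_fejer {l σ : ℝ} (hσ : 0 < σ)
    (ha : LSeriesSummable (fun n => (a n : ℂ)) σ) (hl : 0 < l) (x : ℝ) :
    HasSum (fun n : ℕ => a n / n ^ σ * fejer l (x - Real.log n))
      (∫ t in (-l)..l, twistedTent l x t *
        LSeries (fun n => (a n : ℂ)) (σ + t * Complex.I)).re := by
  refine (Complex.hasSum_re (hasSum_term_mul_fejer ha hl x)).congr_fun fun n => ?_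
  rcases eq_or_ne n 0 with rfl | hn
  · simp [hσ.ne']
  have hcpow : (n : ℂ) ^ (σ : ℂ) = ((n ^ σ : ℝ) : ℂ) := by
    rw [Complex.ofReal_cpow n.cast_nonneg, Complex.ofReal_natCast]
  rw [LSeries.term_of_ne_zero hn, Complex.re_mul_ofReal, hcpow, ← Complex.ofReal_div,
    Complex.ofReal_re]

variable (hG : ContinuousOn G {s | 1 ≤ s.re})
  (hsum : ∀ s : ℂ, 1 < s.re → LSeriesSummable (fun n => (a n : ℂ)) s)
  (hpole : ∀ s : ℂ, 1 < s.re → LSeries (fun n => (a n : ℂ)) s = A / (s - 1) + G s)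
include hG hpole

lemma integral_twistedTent_mul_LSeries {l σ : ℝ} (hσ : 1 < σ) (hl : 0 < l) (x : ℝ) :
    ∫ t in (-l)..l, twistedTent l x t * LSeries (fun n => (a n : ℂ)) (σ + t * Complex.I) =
      ((A * ∫ u in Ioi (0 : ℝ), Real.exp (-(σ - 1) * u) * fejer l (x - u) : ℝ) : ℂ) +
        ∫ t in (-l)..l, twistedTent l x t * G (σ + t * Complex.I) := by
  have hre (t : ℝ) : 1 < ((σ : ℂ) + t * Complex.I).re := by simpa using hσ
  have hpole_int := integral_twistedTent_div (s := ((σ - 1 : ℝ) : ℂ)) (by simpa using hσ) hl x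
  have hsplit (t : ℝ) :
      twistedTent l x t * LSeries (fun n => (a n : ℂ)) (σ + t * Complex.I) =
        A * (twistedTent l x t / ((σ - 1 : ℝ) + t * Complex.I)) +
          twistedTent l x t * G (σ + t * Complex.I) := by
    rw [hpole _ (hre t)]
    push_cast
    ring
  have hcont := continuous_twistedTent l x
  have hne (t : ℝ) : ((σ - 1 : ℝ) : ℂ) + t * Complex.I ≠ 0 := fun h =>
    (sub_pos.2 hσ).ne' (by simpa using congrArg Complex.re h)
  simp_rw [hsplit]
  rw [intervalIntegral.integral_add, intervalIntegral.integral_const_mul, hpole_int,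
    Complex.ofReal_mul, ← integral_complex_ofReal]
  · push_cast; rfl
  · exact Continuous.intervalIntegrable (by fun_prop (disch := exact hne _)) _ _
  · exact (hcont.mul (hG.comp_continuous (by fun_prop) fun t => (hre t).le)).intervalIntegrable _ _

include hsum

lemma hasSum_div_mul_fejer (ha : ∀ n, 0 ≤ a n) {l : ℝ} (hl : 0 < l) (x : ℝ) :
    HasSum (fun n : ℕ => a n / n * fejer l (x - Real.log n))
      (A * (∫ u in Ioi (0 : ℝ), fejer l (x - u)) +
        (∫ t in (-l)..l, twistedTent l x t * G ((1 : ℝ) + t * Complex.I)).re) := by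
  have hpole_lim : Tendsto
      (fun σ : ℝ => ∫ u in Ioi (0 : ℝ), Real.exp (-(σ - 1) * u) * fejer l (x - u)) (𝓝[>] 1)
      (𝓝 (∫ u in Ioi (0 : ℝ), fejer l (x - u))) := by
    refine (tendsto_integral_exp_mul_fejer hl x).comp (tendsto_nhdsWithin_iff.2 ⟨?_, ?_⟩)
    · exact tendsto_nhdsWithin_of_tendsto_nhds (Continuous.tendsto' (by fun_prop) _ _ (by simp))
    · filter_upwards [self_mem_nhdsWithin] with σ (hσ : 1 < σ) using sub_pos.2 hσ
  refine hasSum_of_tendsto_of_le (𝓕 := 𝓝[>] (1 : ℝ))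
    (F := fun σ n => a n / n ^ σ * fejer l (x - Real.log n)) ?_ (fun n => ?_) ?_
    ((hpole_lim.const_mul A).add
      ((Complex.continuous_re.tendsto _).comp (tendsto_integral_twistedTent_mul_nhdsGT hG l x)))
  · filter_upwards [self_mem_nhdsWithin] with σ (hσ : 1 < σ) n
    have hfejer := fejer_nonneg hl.le (x - Real.log n)
    have han := ha n
    exact ⟨by positivity,
      mul_le_mul_of_nonneg_right (div_natCast_rpow_le_div han hσ.le n) hfejer⟩
  · exact tendsto_nhdsWithin_of_tendsto_nhds ((tendsto_div_natCast_rpow_nhds_one _ n).mul_const _)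
  · filter_upwards [self_mem_nhdsWithin] with σ (hσ : 1 < σ)
    simpa only [integral_twistedTent_mul_LSeries hG hpole hσ hl x, Complex.add_re,
      Complex.ofReal_re, Function.comp_apply] using
      hasSum_div_rpow_mul_fejer (zero_lt_one.trans hσ) (hsum σ (by simpa using hσ)) hl x

-- The pole contributes the main term; the boundary values of `G` are killed by Riemann–Lebesgue.
lemma tendsto_tsum_div_mul_fejer (ha : ∀ n, 0 ≤ a n) {l : ℝ} (hl : 0 < l) :
    Tendsto (fun x => ∑' n : ℕ, a n / n * fejer l (x - Real.log n)) atTop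
      (𝓝 (A * ∫ v, fejer l v)) := by
  simp_rw [fun x => (hasSum_div_mul_fejer hG hsum hpole ha hl x).tsum_eq]
  simpa using ((tendsto_integral_Ioi_fejer hl).const_mul A).add
    ((Complex.continuous_re.tendsto _).comp
      (tendsto_integral_twistedTent_mul_atTop hl fun t => G ((1 : ℝ) + t * Complex.I)))

end WienerIkehara

section Localization

variable {α : Type*} {b c : α → ℝ}

lemma tendsto_tsum_mul_fejer_atTop_zero (hb : Summable b) {l : ℝ} (hl : 0 < l) :
    Tendsto (fun x => ∑' n, b n * fejer l (x - c n)) atTop (𝓝 0) := by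
  rw [← tsum_zero (α := ℝ) (β := α)]
  refine tendsto_tsum_of_dominated_convergence (hb.norm.mul_right l) (fun n => ?_)
    (.of_forall fun x n => ?_)
  · simpa [sub_eq_add_neg] using ((tendsto_fejer_atTop hl).comp
      (tendsto_atTop_add_const_right atTop (-c n) tendsto_id)).const_mul (b n)
  · rw [norm_mul, Real.norm_of_nonneg (fejer_nonneg hl.le _)]
    exact mul_le_mul_of_nonneg_left (fejer_le hl.le _) (norm_nonneg _)

lemma tsum_mul_fejer_le {C d l x : ℝ} (hb : ∀ n, 0 ≤ b n)
    (hsum : ∀ x l, 0 < l → Summable fun n => b n * fejer l (x - c n)) (hl : 0 < l)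
    (hC : ∀ v, d < |v| → fejer l v ≤ C / l * (fejer 1 v + fejer 1 (v + Real.pi)))
    (hfar : ∀ n, b n ≠ 0 → d < |x - c n|) :
    ∑' n, b n * fejer l (x - c n) ≤
      C / l * (∑' n, b n * fejer 1 (x - c n) + ∑' n, b n * fejer 1 (x + Real.pi - c n)) := by
  have h₁ := hsum x 1 one_pos
  have h₂ := hsum (x + Real.pi) 1 one_pos
  rw [← h₁.tsum_add h₂, ← tsum_mul_left]
  refine (hsum x l hl).tsum_le_tsum (fun n => ?_) ((h₁.add h₂).mul_left _)
  rcases eq_or_ne (b n) 0 with hn | hn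
  · simp [hn]
  calc b n * fejer l (x - c n)
      ≤ b n * (C / l * (fejer 1 (x - c n) + fejer 1 (x - c n + Real.pi))) :=
        mul_le_mul_of_nonneg_left (hC _ (hfar n hn)) (hb n)
    _ = _ := by rw [sub_add_eq_add_sub]; ring

-- If no `c n` lay within `d` of `x`, the smoothed sum at `x`, which tends to `J` for every
-- bandwidth `l`, would be `O(J / l)`.
lemma eventually_exists_abs_sub_le {J d : ℝ} (hb : ∀ n, 0 ≤ b n)
    (hsum : ∀ x l, 0 < l → Summable fun n => b n * fejer l (x - c n)) (hJ : 0 < J)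
    (hlim : ∀ l, 0 < l → Tendsto (fun x => ∑' n, b n * fejer l (x - c n)) atTop (𝓝 J))
    (hd : 0 < d) : ∀ᶠ x in atTop, ∃ n, b n ≠ 0 ∧ |x - c n| ≤ d := by
  obtain ⟨C, hC⟩ := exists_fejer_le_div_mul hd
  set l := 2 * |C| + 1
  have hl : 0 < l := by positivity
  have hlim_bound : Tendsto (fun x => C / l * (∑' n, b n * fejer 1 (x - c n) +
      ∑' n, b n * fejer 1 (x + Real.pi - c n))) atTop (𝓝 (C / l * (J + J))) :=
    ((hlim 1 one_pos).add ((hlim 1 one_pos).comp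
      (tendsto_atTop_add_const_right atTop Real.pi tendsto_id))).const_mul _
  have hlt : C / l * (J + J) < J := by
    rw [div_mul_eq_mul_div, div_lt_iff₀ hl]
    nlinarith [le_abs_self C]
  filter_upwards [hlim_bound.eventually_lt (hlim l hl) hlt] with x hx
  by_contra! hfar
  exact (tsum_mul_fejer_le hb hsum hl (fun v => hC l v hl) hfar).not_gt hx

end Localization

/-! ### Sets with short gaps -/

/-- `S` meets every interval `(y, (1 + ε) y]` with `y` large, for each `ε > 0`; equivalently,
consecutive elements of `S` have ratio tending to `1`. -/
def HasShortGaps (S : Set ℕ) : Prop :=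
  ∀ ε : ℝ, 0 < ε → ∀ᶠ y : ℝ in atTop, ∃ n ∈ S, y < n ∧ (n : ℝ) ≤ (1 + ε) * y

lemma hasShortGaps_of_eventually_abs_sub_log_le {S : Set ℕ}
    (hS : ∀ d : ℝ, 0 < d → ∀ᶠ x in atTop, ∃ n ∈ S, |x - Real.log n| ≤ d) : HasShortGaps S := by
  intro ε hε
  set d := Real.log (1 + ε) / 3 with hd_def
  have hd : 0 < d := div_pos (Real.log_pos (by linarith)) three_pos
  have hshift : Tendsto (fun y => Real.log y + 2 * d) atTop atTop :=
    tendsto_atTop_add_const_right _ _ Real.tendsto_log_atTop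
  filter_upwards [hshift.eventually (hS d hd), eventually_ge_atTop 1] with y ⟨n, hnS, hn⟩ hy
  have hy₀ : 0 < y := one_pos.trans_le hy
  obtain ⟨hlower, hupper⟩ := abs_le.1 hn
  have hn₀ : (0 : ℝ) < n := by
    refine Nat.cast_pos.2 (Nat.pos_of_ne_zero ?_)
    rintro rfl
    rw [Nat.cast_zero, Real.log_zero] at hupper
    linarith [Real.log_nonneg hy]
  refine ⟨n, hnS, (Real.log_lt_log_iff hy₀ hn₀).1 (by linarith), ?_⟩
  rw [← Real.log_le_log_iff hn₀ (by positivity), Real.log_mul (by positivity) hy₀.ne']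
  linarith

theorem hasShortGaps_of_LSeries_eq_div_add {a : ℕ → ℝ} {A : ℝ} {G : ℂ → ℂ} {S : Set ℕ}
    (hG : ContinuousOn G {s | 1 ≤ s.re})
    (hsum : ∀ s : ℂ, 1 < s.re → LSeriesSummable (fun n => (a n : ℂ)) s)
    (hpole : ∀ s : ℂ, 1 < s.re → LSeries (fun n => (a n : ℂ)) s = A / (s - 1) + G s)
    (ha : ∀ n, 0 ≤ a n) (hA : 0 < A) (hS : Summable (Sᶜ.indicator fun n : ℕ => a n / n)) :
    HasShortGaps S := by
  set w : ℕ → ℝ := fun n => a n / n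
  have hw (n : ℕ) : 0 ≤ w n := div_nonneg (ha n) n.cast_nonneg
  have hsum_w (x l : ℝ) (hl : 0 < l) : Summable fun n : ℕ => w n * fejer l (x - Real.log n) :=
    (hasSum_div_mul_fejer hG hsum hpole ha hl x).summable
  have hsum_S (T : Set ℕ) (x l : ℝ) (hl : 0 < l) :
      Summable fun n : ℕ => T.indicator w n * fejer l (x - Real.log n) :=
    ((hsum_w x l hl).indicator T).congr fun n => indicator_mul_left _ _ _
  have hlim (l : ℝ) (hl : 0 < l) :
      Tendsto (fun x => ∑' n : ℕ, S.indicator w n * fejer l (x - Real.log n)) atTop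
        (𝓝 (A * ∫ v, fejer 1 v)) := by
    have h := (tendsto_tsum_div_mul_fejer hG hsum hpole ha hl).sub
      (tendsto_tsum_mul_fejer_atTop_zero (c := fun n : ℕ => Real.log n) hS hl)
    rw [sub_zero, integral_fejer_eq_integral_fejer_one hl] at h
    refine h.congr fun x => ?_
    rw [← (hsum_w x l hl).tsum_sub (hsum_S Sᶜ x l hl)]
    refine tsum_congr fun n => ?_
    rw [← sub_mul, indicator_compl, Pi.sub_apply, sub_sub_cancel]
  refine hasShortGaps_of_eventually_abs_sub_log_le fun d hd => ?_
  filter_upwards [eventually_exists_abs_sub_le (indicator_nonneg fun n _ => hw n) (hsum_S S)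
    (mul_pos hA (integral_fejer_pos one_pos)) hlim hd] with x ⟨n, hn, hxn⟩
  exact ⟨n, mem_of_indicator_ne_zero hn, hxn⟩

open ArithmeticFunction.vonMangoldt in
theorem hasShortGaps_setOf_prime_and_eq_mod {q : ℕ} [NeZero q] {a : ZMod q} (ha : IsUnit a) :
    HasShortGaps {p : ℕ | p.Prime ∧ (p : ZMod q) = a} := by
  refine hasShortGaps_of_LSeries_eq_div_add (A := (q.totient : ℝ)⁻¹)
    (continuousOn_LFunctionResidueClassAux a) (fun s hs => ?_) (fun s hs => ?_)
    (residueClass_nonneg a) (by simpa using NeZero.pos q) ?_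
  · exact LSeriesSummable_of_abscissaOfAbsConv_lt_re
      ((abscissaOfAbsConv_residueClass_le_one a).trans_lt (by exact_mod_cast hs))
  · rw [eqOn_LFunctionResidueClassAux ha hs]
    push_cast
    ring
  · refine (summable_residueClass_non_primes_div a).congr fun n => ?_
    by_cases hn : n.Prime <;> by_cases hna : (n : ZMod q) = a <;>
      simp [residueClass, hn, hna]

theorem hasShortGaps_setOf_prime : HasShortGaps {p | p.Prime} := by
  simpa [Subsingleton.elim _ (1 : ZMod 1)] using hasShortGaps_setOf_prime_and_eq_mod (q := 1)
    isUnit_one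

/-! ### Greedy expansions -/

lemma HasShortGaps.infinite {S : Set ℕ} (hS : HasShortGaps S) : S.Infinite := by
  refine infinite_of_forall_exists_gt fun m => ?_
  obtain ⟨y, ⟨n, hnS, hyn, -⟩, hmy⟩ := ((hS 1 one_pos).and (eventually_ge_atTop (m : ℝ))).exists
  exact ⟨n, hnS, by exact_mod_cast hmy.trans_lt hyn⟩

/-- The least element of `S` above `y`, with junk value `0` if there is none. -/
noncomputable def leastAbove (S : Set ℕ) (y : ℝ) : ℕ := sInf {n ∈ S | y < n}

section LeastAbove

variable {S : Set ℕ} {y : ℝ}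

lemma leastAbove_mem_and_lt (hS : S.Infinite) (y : ℝ) :
    leastAbove S y ∈ S ∧ y < leastAbove S y := by
  refine Nat.sInf_mem (s := {n ∈ S | y < n}) ?_
  obtain ⟨n, hnS, hn⟩ := hS.exists_gt ⌈y⌉₊
  exact ⟨n, hnS, (Nat.le_ceil y).trans_lt (by exact_mod_cast hn)⟩

lemma leastAbove_le {n : ℕ} (hnS : n ∈ S) (hn : y < n) : leastAbove S y ≤ n :=
  Nat.sInf_le ⟨hnS, hn⟩

end LeastAbove

/-- The greedy expansion of `ℓ` by reciprocals of elements of `S`: the `k`-th pair consists of the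
`k`-th denominator and of what remains of `ℓ` before its reciprocal is subtracted. The denominator
is the least element of `S` that exceeds its predecessor and keeps the next remainder positive. -/
noncomputable def greedyPair (S : Set ℕ) (ℓ : ℝ) : ℕ → ℕ × ℝ
  | 0 => (leastAbove S ℓ⁻¹, ℓ)
  | k + 1 =>
    let r := (greedyPair S ℓ k).2 - ((greedyPair S ℓ k).1 : ℝ)⁻¹
    (leastAbove S (max ((greedyPair S ℓ k).1 : ℝ) r⁻¹), r)

/-- The `k`-th denominator of the greedy expansion of `ℓ` over `S`. -/
noncomputable def greedyDenom (S : Set ℕ) (ℓ : ℝ) (k : ℕ) : ℕ := (greedyPair S ℓ k).1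

/-- The remainder of `ℓ` after the first `k` terms of its greedy expansion over `S`. -/
noncomputable def greedyRem (S : Set ℕ) (ℓ : ℝ) (k : ℕ) : ℝ := (greedyPair S ℓ k).2

section Greedy

variable {S : Set ℕ} {ℓ : ℝ}

lemma greedyRem_succ (S : Set ℕ) (ℓ : ℝ) (k : ℕ) :
    greedyRem S ℓ (k + 1) = greedyRem S ℓ k - (greedyDenom S ℓ k : ℝ)⁻¹ := rfl

lemma greedyDenom_succ (S : Set ℕ) (ℓ : ℝ) (k : ℕ) :
    greedyDenom S ℓ (k + 1) =
      leastAbove S (max (greedyDenom S ℓ k : ℝ) (greedyRem S ℓ (k + 1))⁻¹) := rfl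

lemma sum_inv_greedyDenom (S : Set ℕ) (ℓ : ℝ) (k : ℕ) :
    ∑ i ∈ Finset.range k, (greedyDenom S ℓ i : ℝ)⁻¹ = ℓ - greedyRem S ℓ k := by
  induction k with
  | zero => simp [greedyRem, greedyPair]
  | succ k ih => rw [Finset.sum_range_succ, ih, greedyRem_succ]; ring

lemma greedyDenom_mem (hS : S.Infinite) (ℓ : ℝ) : ∀ k, greedyDenom S ℓ k ∈ S
  | 0 => (leastAbove_mem_and_lt hS _).1
  | _ + 1 => (leastAbove_mem_and_lt hS _).1

lemma inv_greedyRem_lt_greedyDenom (hS : S.Infinite) (ℓ : ℝ) :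
    ∀ k, (greedyRem S ℓ k)⁻¹ < greedyDenom S ℓ k
  | 0 => (leastAbove_mem_and_lt hS _).2
  | _ + 1 => (le_max_right _ _).trans_lt (leastAbove_mem_and_lt hS _).2

lemma strictMono_greedyDenom (hS : S.Infinite) (ℓ : ℝ) : StrictMono (greedyDenom S ℓ) :=
  strictMono_nat_of_lt_succ fun _ =>
    Nat.cast_lt.1 ((le_max_left _ _).trans_lt (leastAbove_mem_and_lt hS _).2)

lemma greedyRem_pos (hS : S.Infinite) (hℓ : 0 < ℓ) (k : ℕ) : 0 < greedyRem S ℓ k := by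
  induction k with
  | zero => exact hℓ
  | succ k ih =>
    rw [greedyRem_succ, sub_pos]
    exact inv_lt_of_inv_lt₀ ih (inv_greedyRem_lt_greedyDenom hS ℓ k)

lemma summable_inv_greedyDenom (hS : S.Infinite) (hℓ : 0 < ℓ) :
    Summable fun k => (greedyDenom S ℓ k : ℝ)⁻¹ := by
  refine summable_of_sum_range_le (c := ℓ) (fun k => by positivity) fun k => ?_
  rw [sum_inv_greedyDenom]
  linarith [greedyRem_pos hS hℓ k]

lemma mem_range_greedyDenom (hS : S.Infinite) {K n : ℕ}
    (hK : ∀ k ≥ K, (greedyRem S ℓ (k + 1))⁻¹ < greedyDenom S ℓ k) (hnS : n ∈ S)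
    (hKn : greedyDenom S ℓ K < n) : n ∈ range (greedyDenom S ℓ) := by
  by_contra hn
  have hlt : ∀ k ≥ K, greedyDenom S ℓ k < n := fun k hk => by
    induction k, hk using Nat.le_induction with
    | base => exact hKn
    | succ k hk ih =>
      have hkn : (greedyDenom S ℓ k : ℝ) < n := Nat.cast_lt.2 ih
      exact (leastAbove_le hnS (max_lt hkn ((hK k hk).trans hkn))).lt_of_ne fun h => hn ⟨k + 1, h⟩
  have hle : n ≤ greedyDenom S ℓ (max K n) :=
    (le_max_right K n).trans (strictMono_greedyDenom hS ℓ).le_apply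
  exact (hlt _ (le_max_left K n)).not_ge hle

-- Otherwise the expansion would from some point on run through all elements of `S`.
lemma frequently_greedyDenom_le_inv_greedyRem_succ (hS : S.Infinite)
    (hdiv : ¬ Summable (S.indicator fun n : ℕ => (n : ℝ)⁻¹)) (hℓ : 0 < ℓ) :
    ∃ᶠ k in atTop, (greedyDenom S ℓ k : ℝ) ≤ (greedyRem S ℓ (k + 1))⁻¹ := by
  refine fun hev => hdiv ?_
  simp only [not_le] at hev
  obtain ⟨K, hK⟩ := eventually_atTop.1 hev
  have hsum : Summable ((range (greedyDenom S ℓ)).indicator fun n : ℕ => (n : ℝ)⁻¹) := by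
    rw [← summable_subtype_iff_indicator,
      ← (Equiv.ofInjective _ (strictMono_greedyDenom hS ℓ).injective).summable_iff]
    exact summable_inv_greedyDenom hS hℓ
  refine hsum.of_norm_bounded_eventually_nat ?_
  filter_upwards [eventually_gt_atTop (greedyDenom S ℓ K)] with n hn
  by_cases hnS : n ∈ S
  · simp [hnS, mem_range_greedyDenom hS hK hnS hn]
  · simpa [hnS] using indicator_nonneg (fun _ _ => by positivity) n

lemma greedyDenom_succ_le_of_exists {ε : ℝ} {k : ℕ}
    (hk : (greedyDenom S ℓ k : ℝ) ≤ (greedyRem S ℓ (k + 1))⁻¹)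
    (hgap : ∃ n ∈ S, (greedyRem S ℓ (k + 1))⁻¹ < n ∧
      (n : ℝ) ≤ (1 + ε) * (greedyRem S ℓ (k + 1))⁻¹) :
    (greedyDenom S ℓ (k + 1) : ℝ) ≤ (1 + ε) * (greedyRem S ℓ (k + 1))⁻¹ := by
  obtain ⟨n, hnS, hlt, hle⟩ := hgap
  refine le_trans ?_ hle
  rw [greedyDenom_succ, max_eq_right hk]
  exact_mod_cast leastAbove_le hnS hlt

lemma greedyRem_succ_le_mul (hS : S.Infinite) (hℓ : 0 < ℓ) {ε : ℝ} (hε : 0 < ε) {k : ℕ}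
    (hk : (greedyDenom S ℓ k : ℝ) ≤ (1 + ε) * (greedyRem S ℓ k)⁻¹) :
    greedyRem S ℓ (k + 1) ≤ ε * greedyRem S ℓ k := by
  have hr := greedyRem_pos hS hℓ k
  have hp : 0 < (greedyDenom S ℓ k : ℝ) :=
    (inv_pos.2 hr).trans (inv_greedyRem_lt_greedyDenom hS ℓ k)
  have hinv : ((1 + ε) * (greedyRem S ℓ k)⁻¹)⁻¹ ≤ (greedyDenom S ℓ k : ℝ)⁻¹ := by gcongr
  calc greedyRem S ℓ (k + 1)
      ≤ greedyRem S ℓ k - ((1 + ε) * (greedyRem S ℓ k)⁻¹)⁻¹ := by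
        rw [greedyRem_succ]; gcongr
    _ = ε * greedyRem S ℓ k / (1 + ε) := by field_simp; ring
    _ ≤ ε * greedyRem S ℓ k := div_le_self (by positivity) (by linarith)

variable (hS : HasShortGaps S) (hdiv : ¬ Summable (S.indicator fun n : ℕ => (n : ℝ)⁻¹))
  (hℓ : 0 < ℓ)
include hS hdiv hℓ

lemma eventually_greedyDenom_le_inv_greedyRem_succ :
    ∀ᶠ k in atTop, (greedyDenom S ℓ k : ℝ) ≤ (greedyRem S ℓ (k + 1))⁻¹ := by
  have hinf := hS.infinite
  have hmono := strictMono_greedyDenom hinf ℓ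
  obtain ⟨Y, hY⟩ := eventually_atTop.1 (hS (1 / 2) one_half_pos)
  obtain ⟨K, hK, hYK⟩ := ((frequently_greedyDenom_le_inv_greedyRem_succ hinf hdiv hℓ).and_eventually
    ((tendsto_natCast_atTop_atTop.comp hmono.tendsto_atTop).eventually_ge_atTop Y)).exists
  refine eventually_atTop.2 ⟨K, fun k hk => ?_⟩
  induction k, hk using Nat.le_induction with
  | base => exact hK
  | succ k hk ih =>
    have hr := greedyRem_pos hinf hℓ (k + 1)
    have hYk : Y ≤ (greedyRem S ℓ (k + 1))⁻¹ :=
      hYK.trans ((Nat.cast_le.2 (hmono.monotone hk)).trans ih)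
    have hp := greedyDenom_succ_le_of_exists ih (hY _ hYk)
    have hr' := greedyRem_succ_le_mul hinf hℓ one_half_pos hp
    calc (greedyDenom S ℓ (k + 1) : ℝ) ≤ (1 + 1 / 2) * (greedyRem S ℓ (k + 1))⁻¹ := hp
      _ ≤ (1 / 2 * greedyRem S ℓ (k + 1))⁻¹ := by
        rw [mul_inv]; gcongr; norm_num
      _ ≤ (greedyRem S ℓ (k + 1 + 1))⁻¹ := inv_anti₀ (greedyRem_pos hinf hℓ _) hr'

lemma tendsto_inv_greedyRem_atTop : Tendsto (fun k => (greedyRem S ℓ k)⁻¹) atTop atTop := by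
  rw [← tendsto_add_atTop_iff_nat 1]
  exact tendsto_atTop_mono' _ (eventually_greedyDenom_le_inv_greedyRem_succ hS hdiv hℓ)
    (tendsto_natCast_atTop_atTop.comp (strictMono_greedyDenom hS.infinite ℓ).tendsto_atTop)

lemma eventually_greedyRem_succ_le_mul {ε : ℝ} (hε : 0 < ε) :
    ∀ᶠ k in atTop, greedyRem S ℓ (k + 1) ≤ ε * greedyRem S ℓ k := by
  rw [← map_add_atTop_eq_nat 1, eventually_map]
  have hgap := (tendsto_inv_greedyRem_atTop hS hdiv hℓ).eventually (hS ε hε)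
  filter_upwards [eventually_greedyDenom_le_inv_greedyRem_succ hS hdiv hℓ,
    (tendsto_add_atTop_nat 1).eventually hgap] with k hk hk'
  exact greedyRem_succ_le_mul hS.infinite hℓ hε (greedyDenom_succ_le_of_exists hk hk')

lemma hasSum_inv_greedyDenom : HasSum (fun k => (greedyDenom S ℓ k : ℝ)⁻¹) ℓ := by
  rw [hasSum_iff_tendsto_nat_of_nonneg (fun k => by positivity)]
  simp_rw [sum_inv_greedyDenom]
  simpa using (tendsto_inv_greedyRem_atTop hS hdiv hℓ).inv_tendsto_atTop.const_sub ℓ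

lemma pow_isBigO_greedyDenom (θ : ℝ) :
    (fun k => θ ^ k) =O[atTop] fun k => (greedyDenom S ℓ k : ℝ) := by
  have hr := greedyRem_pos hS.infinite hℓ
  set T := |θ| + 1
  have hT : 0 < T := by positivity
  obtain ⟨K, hK⟩ := eventually_atTop.1 (eventually_greedyRem_succ_le_mul hS hdiv hℓ (inv_pos.2 hT))
  have hbound : ∀ k ≥ K, T ^ k * greedyRem S ℓ k ≤ T ^ K * greedyRem S ℓ K := fun k hk => by
    induction k, hk using Nat.le_induction with
    | base => rfl
    | succ k hk ih =>
      calc T ^ (k + 1) * greedyRem S ℓ (k + 1) ≤ T ^ (k + 1) * (T⁻¹ * greedyRem S ℓ k) := by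
            gcongr; exact hK k hk
        _ = T ^ k * greedyRem S ℓ k := by rw [pow_succ]; field_simp
        _ ≤ T ^ K * greedyRem S ℓ K := ih
  refine .of_bound (T ^ K * greedyRem S ℓ K) (eventually_atTop.2 ⟨K, fun k hk => ?_⟩)
  calc ‖θ ^ k‖ ≤ T ^ k := by
        rw [norm_pow]; exact pow_le_pow_left₀ (norm_nonneg θ) (lt_add_one |θ|).le k
    _ ≤ T ^ K * greedyRem S ℓ K * (greedyRem S ℓ k)⁻¹ := by
        rw [le_mul_inv_iff₀ (hr k)]; exact hbound k hk
    _ ≤ T ^ K * greedyRem S ℓ K * ‖(greedyDenom S ℓ k : ℝ)‖ := by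
        have := hr K
        rw [Real.norm_natCast]
        gcongr
        exact (inv_greedyRem_lt_greedyDenom hS.infinite ℓ k).le

end Greedy

lemma exists_pos_forall_mul_le_of_isBigO {f g : ℕ → ℝ} (hfg : f =O[atTop] g) (hg : ∀ k, 0 < g k) :
    ∃ c : ℝ, 0 < c ∧ ∀ k, c * f k ≤ g k := by
  obtain ⟨C, hC, hfC⟩ := Asymptotics.bound_of_isBigO_nat_atTop hfg
  refine ⟨C⁻¹, inv_pos.2 hC, fun k => (inv_mul_le_iff₀ hC).2 ?_⟩
  calc f k ≤ ‖f k‖ := Real.le_norm_self _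
    _ ≤ C * ‖g k‖ := hfC (hg k).ne'
    _ = C * g k := by rw [Real.norm_of_nonneg (hg k).le]

theorem stmt_0_general (ℓ : ℝ) (hℓ : 0 < ℓ) :
    ∃ p : ℕ → ℕ, StrictMono p ∧ (∀ k, (p k).Prime) ∧
      HasSum (fun k => (1 : ℝ) / (p k)) ℓ ∧
      ∀ θ : ℝ, ∃ c : ℝ, 0 < c ∧ ∀ k, c * θ ^ k ≤ (p k : ℝ) := by
  have hgaps := hasShortGaps_setOf_prime
  have hdiv : ¬ Summable ({p | p.Prime}.indicator fun n : ℕ => (n : ℝ)⁻¹) := by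
    simpa only [one_div] using not_summable_one_div_on_primes
  have hprime := greedyDenom_mem hgaps.infinite ℓ
  refine ⟨greedyDenom {p | p.Prime} ℓ, strictMono_greedyDenom hgaps.infinite ℓ, hprime,
    by simpa only [one_div] using hasSum_inv_greedyDenom hgaps hdiv hℓ, fun θ => ?_⟩
  exact exists_pos_forall_mul_le_of_isBigO (pow_isBigO_greedyDenom hgaps hdiv hℓ θ)
    fun k => by exact_mod_cast (hprime k).pos

theorem stmt_0 (ℓ θ : ℝ) (hℓ : 0 < ℓ) (hθ : 0 < θ) :
    ∃ p : ℕ → ℕ, StrictMono p ∧ (∀ k, (p k).Prime) ∧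
      HasSum (fun k => (1 : ℝ) / (p k)) ℓ ∧
      ∃ c : ℝ, 0 < c ∧ ∀ k, c * θ ^ k ≤ (p k : ℝ) := by
  obtain ⟨p, hmono, hprime, hsum, hgrowth⟩ := stmt_0_general ℓ hℓ
  exact ⟨p, hmono, hprime, hsum, hgrowth θ⟩
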